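/- arXiv:2310.06416 — 2 statements merged into one kernel-verified Lean document; each statement's English description precedes it below -/
import Mathlib

section
/- Fix r > 0, x_0, x_R ∈ ℝ and t > 0. Let p(x,t) = f_L(x) + e^{−rt}·( f_{N(x_0,t)}(x) − (f_{N(0,t)} * f_L)(x) ), where f_L(x) = √(r/2)·e^{−√(2r)·|x − x_R|}, f_{N(m,t)}(x) = (2πt)^{−1/2}·e^{−(x−m)²/(2t)}, and * denotes convolution. Then the first moment satisfies ∫_ℝ x·p(x,t) dx = x_R + e^{−rt}·(x_0 − x_R). -/
open MeasureTheory

/-!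
The density `p = f_L + e^{-rt} (f_{N(x₀,t)} - f_{N(0,t)} * f_L)` combines three functions of total
mass one, with means `x_R`, `x₀` and `0 + x_R`: means add under convolution, because
`x = y + (x - y)` turns `x (f * g)(x)` into `((y f) * g)(x) + (f * (y g))(x)`. The mean is linear in
the density, hence equals `x_R + e^{-rt} (x₀ - x_R)`.
-/

open ProbabilityTheory ContinuousLinearMap
open scoped NNReal Convolution

section Integral

variable {F : Type*} [NormedAddCommGroup F] [NormedSpace ℝ F]

theorem integral_add_smul_sub {α : Type*} [MeasurableSpace α] {ν : Measure α} {u v w : α → F}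
    (hu : Integrable u ν) (hv : Integrable v ν) (hw : Integrable w ν) (s : ℝ) :
    ∫ x, (u + s • (v - w)) x ∂ν = ∫ x, u x ∂ν + s • (∫ x, v x ∂ν - ∫ x, w x ∂ν) := by
  rw [integral_add' hu ((hv.sub hw).smul s), ← integral_sub' hv hw, ← integral_smul]
  rfl

theorem integral_eq_zero_of_odd {G : Type*} [AddGroup G] [MeasurableSpace G] [MeasurableNeg G]
    {ν : Measure G} [ν.IsNegInvariant] {u : G → F} (hu : u.Odd) : ∫ x, u x ∂ν = 0 := by
  have : IsAddTorsionFree F := .of_isTorsionFree ℝ F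
  rw [← self_eq_neg, ← integral_neg, ← integral_neg_eq_self]
  simp only [hu _]

end Integral

theorem integrable_norm_pow_mul_exp_neg_mul_norm {E : Type*} [NormedAddCommGroup E]
    [NormedSpace ℝ E] [FiniteDimensional ℝ E] [Nontrivial E] [MeasurableSpace E] [BorelSpace E]
    (μ : Measure E) [μ.IsAddHaarMeasure] (n : ℕ) {b : ℝ} (hb : 0 < b) :
    Integrable (fun x ↦ ‖x‖ ^ n * Real.exp (-b * ‖x‖)) μ := by
  rw [integrable_fun_norm_addHaar μ (f := fun y ↦ y ^ n * Real.exp (-b * y))]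
  have radial := integrableOn_rpow_mul_exp_neg_mul_rpow
    (s := (Module.finrank ℝ E - 1 + n : ℕ)) (neg_one_lt_zero.trans_le (Nat.cast_nonneg _))
    one_pos hb
  simpa only [smul_eq_mul, Real.rpow_natCast, Real.rpow_one, pow_add, mul_assoc] using radial

section Mean

variable {E : Type*} [NormedAddCommGroup E] [NormedSpace ℝ E] [MeasurableSpace E]

/-- The real function `f` has total mass one and mean `m` with respect to `μ`, both integrals being
absolutely convergent. Nonnegativity of `f` is not part of the notion, so it applies to signed
combinations of densities. -/
structure HasMean (μ : Measure E) (f : E → ℝ) (m : E) : Prop where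
  integrable : Integrable f μ
  integrable_smul_id : Integrable (fun x ↦ f x • x) μ
  integral_eq_one : ∫ x, f x ∂μ = 1
  integral_smul_id : ∫ x, f x • x ∂μ = m

variable {μ : Measure E} {f g h : E → ℝ} {a b c : E}

theorem HasMean.add_smul_sub (hf : HasMean μ f a) (hg : HasMean μ g b) (hh : HasMean μ h c)
    (s : ℝ) : HasMean μ (f + s • (g - h)) (a + s • (b - c)) := by
  have moment_eq : (fun x ↦ (f + s • (g - h)) x • x) =
      (fun x ↦ f x • x) + s • ((fun x ↦ g x • x) - fun x ↦ h x • x) := by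
    funext x
    simp only [Pi.add_apply, Pi.smul_apply, Pi.sub_apply]
    module
  refine ⟨hf.integrable.add ((hg.integrable.sub hh.integrable).smul s), ?_, ?_, ?_⟩
  · rw [moment_eq]
    exact hf.integrable_smul_id.add ((hg.integrable_smul_id.sub hh.integrable_smul_id).smul s)
  · rw [integral_add_smul_sub hf.integrable hg.integrable hh.integrable, hf.integral_eq_one,
      hg.integral_eq_one, hh.integral_eq_one, sub_self, smul_zero, add_zero]
  · rw [moment_eq, integral_add_smul_sub hf.integrable_smul_id hg.integrable_smul_id
      hh.integrable_smul_id, hf.integral_smul_id, hg.integral_smul_id, hh.integral_smul_id]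

variable [BorelSpace E] [CompleteSpace E]

theorem HasMean.comp_sub_right [μ.IsAddRightInvariant] (hf : HasMean μ f a) (m : E) :
    HasMean μ (fun x ↦ f (x - m)) (a + m) := by
  have mass_integrable := hf.integrable.comp_sub_right m
  have moment_integrable := hf.integrable_smul_id.comp_sub_right m
  have split : (fun x ↦ f (x - m) • x) = fun x ↦ f (x - m) • (x - m) + f (x - m) • m := by
    funext x
    rw [← smul_add, sub_add_cancel]
  have mass : ∫ x, f (x - m) ∂μ = 1 := by
    rw [integral_sub_right_eq_self f m, hf.integral_eq_one]
  refine ⟨mass_integrable, ?_, mass, ?_⟩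
  · rw [split]
    exact moment_integrable.add (mass_integrable.smul_const m)
  · rw [split, integral_add moment_integrable (mass_integrable.smul_const m),
      integral_sub_right_eq_self (fun x ↦ f x • x) m, integral_smul_const, mass,
      hf.integral_smul_id, one_smul]

variable [SecondCountableTopology E] [SFinite μ] [μ.IsAddRightInvariant]

theorem convolution_smul_id_ae_eq (hf : Integrable f μ) (hf_id : Integrable (fun x ↦ f x • x) μ)
    (hg : Integrable g μ) (hg_id : Integrable (fun x ↦ g x • x) μ) :
    (fun x ↦ (f ⋆[lsmul ℝ ℝ, μ] g) x • x) =ᵐ[μ]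
      ((fun y ↦ f y • y) ⋆[(lsmul ℝ ℝ).flip, μ] g) + (f ⋆[lsmul ℝ ℝ, μ] fun y ↦ g y • y) := by
  filter_upwards [hf_id.ae_convolution_exists (lsmul ℝ ℝ).flip hg,
    hf.ae_convolution_exists (lsmul ℝ ℝ) hg_id] with x left_exists right_exists
  simp only [Pi.add_apply, convolution_def]
  rw [← integral_add left_exists right_exists, ← integral_smul_const]
  congr with y
  simp only [flip_apply, lsmul_apply]
  module

theorem HasMean.convolution (hf : HasMean μ f a) (hg : HasMean μ g b) :
    HasMean μ (f ⋆[lsmul ℝ ℝ, μ] g) (a + b) := by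
  have split := convolution_smul_id_ae_eq hf.integrable hf.integrable_smul_id
    hg.integrable hg.integrable_smul_id
  have left_integrable :=
    hf.integrable_smul_id.integrable_convolution (lsmul ℝ ℝ).flip hg.integrable
  have right_integrable := hf.integrable.integrable_convolution (lsmul ℝ ℝ) hg.integrable_smul_id
  refine ⟨hf.integrable.integrable_convolution _ hg.integrable,
    (left_integrable.add right_integrable).congr split.symm, ?_, ?_⟩
  · simp [integral_convolution _ hf.integrable hg.integrable, hf.integral_eq_one,
      hg.integral_eq_one]
  · rw [integral_congr_ae split, integral_add' left_integrable right_integrable,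
      integral_convolution _ hf.integrable_smul_id hg.integrable,
      integral_convolution _ hf.integrable hg.integrable_smul_id]
    simp [hf.integral_eq_one, hf.integral_smul_id, hg.integral_eq_one, hg.integral_smul_id]

end Mean

theorem hasMean_gaussianPDFReal (m : ℝ) {v : ℝ≥0} (hv : v ≠ 0) :
    HasMean volume (gaussianPDFReal m v) m where
  integrable := integrable_gaussianPDFReal m v
  integrable_smul_id := by
    have id_integrable : Integrable id (gaussianReal m v) :=
      memLp_one_iff_integrable.mp (memLp_id_gaussianReal 1)
    rw [gaussianReal_of_var_ne_zero m hv, integrable_withDensity_iff_integrable_smul'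
      (measurable_gaussianPDF m v) (ae_of_all _ fun _ ↦ gaussianPDF_lt_top)] at id_integrable
    simpa only [toReal_gaussianPDF, id_eq] using id_integrable
  integral_eq_one := integral_gaussianPDFReal_eq_one m hv
  integral_smul_id := by
    rw [← integral_gaussianReal_eq_integral_smul hv, integral_id_gaussianReal]

/-- The density of the Laplace distribution with mean `m` and rate (inverse scale) `b`. -/
noncomputable def laplacePDFReal (m b x : ℝ) : ℝ :=
  b / 2 * Real.exp (-b * |x - m|)

theorem integral_exp_neg_mul_abs {b : ℝ} (hb : 0 < b) : ∫ x : ℝ, Real.exp (-b * |x|) = 2 / b := by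
  rw [integral_comp_abs (f := fun x ↦ Real.exp (-b * x)), integral_exp_mul_Ioi (neg_lt_zero.mpr hb),
    mul_zero, Real.exp_zero, neg_div_neg_eq, mul_one_div]

theorem hasMean_laplacePDFReal (m : ℝ) {b : ℝ} (hb : 0 < b) :
    HasMean volume (laplacePDFReal m b) m := by
  suffices centered : HasMean volume (fun x : ℝ ↦ b / 2 * Real.exp (-b * |x|)) 0 by
    simpa only [zero_add] using! centered.comp_sub_right m
  refine ⟨?_, ?_, ?_, integral_eq_zero_of_odd fun x ↦ by simp⟩
  · simpa only [pow_zero, one_mul] using!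
      (integrable_norm_pow_mul_exp_neg_mul_norm volume 0 hb).const_mul (b / 2)
  · refine ((integrable_norm_pow_mul_exp_neg_mul_norm volume 1 hb).const_mul (b / 2)).mono
      (by fun_prop) (ae_of_all _ fun x ↦ le_of_eq ?_)
    simp only [smul_eq_mul, norm_mul, pow_one, Real.norm_eq_abs, abs_abs]
    ring
  · rw [integral_const_mul, integral_exp_neg_mul_abs hb]
    field_simp

theorem sqrt_div_two (r : ℝ) : √(r / 2) = √(2 * r) / 2 := by
  rw [show r / 2 = 2 * r / 2 ^ 2 by ring, Real.sqrt_div' _ (by norm_num),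
    Real.sqrt_sq (by norm_num)]

/-- The mean of Brownian motion started at `x0` with Poissonian resetting at
rate `r > 0` to `xR` equals `xR + e^{-rt}·(x0 - xR)`, computed from the
explicit density `p(x,t)`. -/
theorem mean_resetting (r x0 xR t : ℝ) (hr : 0 < r) (ht : 0 < t)
    (fL fN0 fNx0 p : ℝ → ℝ)
    (hfL : ∀ x, fL x = Real.sqrt (r / 2) * Real.exp (-(Real.sqrt (2 * r)) * |x - xR|))
    (hfN0 : ∀ x, fN0 x = 1 / Real.sqrt (2 * Real.pi * t) * Real.exp (-x ^ 2 / (2 * t)))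
    (hfNx0 : ∀ x, fNx0 x =
      1 / Real.sqrt (2 * Real.pi * t) * Real.exp (-(x - x0) ^ 2 / (2 * t)))
    (hp : ∀ x, p x = fL x + Real.exp (-r * t) * (fNx0 x - ∫ y : ℝ, fN0 (x - y) * fL y)) :
    (∫ x : ℝ, x * p x) = xR + Real.exp (-r * t) * (x0 - xR) := by
  lift t to ℝ≥0 using ht.le
  have t_ne_zero : t ≠ 0 := by exact_mod_cast ht.ne'
  obtain rfl : fL = laplacePDFReal xR √(2 * r) := by
    funext x
    rw [hfL, laplacePDFReal, sqrt_div_two]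
  obtain rfl : fN0 = gaussianPDFReal 0 t := by
    funext x
    rw [hfN0, gaussianPDFReal, sub_zero, one_div]
  obtain rfl : fNx0 = gaussianPDFReal x0 t := by
    funext x
    rw [hfNx0, gaussianPDFReal, one_div]
  obtain rfl : p = laplacePDFReal xR √(2 * r) + Real.exp (-r * t) • (gaussianPDFReal x0 t -
      laplacePDFReal xR √(2 * r) ⋆[lsmul ℝ ℝ, volume] gaussianPDFReal 0 t) := by
    funext x
    simp [hp, convolution_def, mul_comm]
  have laplace_mean := hasMean_laplacePDFReal xR (Real.sqrt_pos.mpr (mul_pos two_pos hr))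
  have convolution_mean := laplace_mean.convolution (hasMean_gaussianPDFReal 0 t_ne_zero)
  have p_mean := laplace_mean.add_smul_sub (hasMean_gaussianPDFReal x0 t_ne_zero) convolution_mean
    (Real.exp (-r * t))
  simpa only [smul_eq_mul, add_zero, mul_comm] using p_mean.integral_smul_id
end

section
/- Let r > 0 and p ∈ (−1, 0), and set R(t) = (r/(p+1))·((t+1)^{p+1} − 1). Define MSD(t) = e^{−R(t)}·∫_0^t e^{R(ω)} dω. Then lim_{t→∞} r·(t+1)^p·MSD(t) = 1; i.e., MSD(t) is asymptotic to (1/r)·(t+1)^{−p}, so the resetting process is subdiffusive with anomalous exponent −p ∈ (0,1). -/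
open MeasureTheory Filter

/-!
Let `ρ` be the resetting intensity, so that `R' = ρ`. The function `e^R / ρ` is an approximate
antiderivative of `e^R`: its derivative is `e^R (1 - ρ' / ρ²)`. Whenever `ρ' / ρ² → 0`, i.e. the
mean waiting time `1 / ρ` varies slowly, L'Hôpital's rule in the `∞ / ∞` form gives
`∫₀ᵗ e^R ~ e^R / ρ`, that is `MSD ~ 1 / ρ`. For `ρ(t) = r (t + 1)^p` the ratio `ρ' / ρ²` is
`(p / r) (t + 1)^{-(p + 1)}`, which vanishes at infinity because `p > -1`.
-/

open Asymptotics Topology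

section DerivAtTop

variable {E : Type*} [NormedAddCommGroup E] [NormedSpace ℝ E] {g g' : ℝ → ℝ}

theorem exists_forall_ge_mul_sub_le_of_eventually_le_deriv {c : ℝ}
    (hg : ∀ᶠ x in atTop, HasDerivAt g (g' x) x) (hc : ∀ᶠ x in atTop, c ≤ g' x) :
    ∃ a, ∀ x ≥ a, c * (x - a) ≤ g x - g a := by
  obtain ⟨a, ha⟩ := eventually_atTop.1 (hg.and hc)
  refine ⟨a, fun x hx ↦ (convex_Ici a).mul_sub_le_image_sub_of_le_deriv
    (fun y hy ↦ (ha y hy).1.continuousAt.continuousWithinAt)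
    (fun y hy ↦ (ha y (interior_subset hy)).1.differentiableAt.differentiableWithinAt)
    (fun y hy ↦ ?_) a Set.self_mem_Ici x hx hx⟩
  obtain ⟨hderiv, hle⟩ := ha y (interior_subset hy)
  rwa [hderiv.deriv]

theorem tendsto_atTop_of_eventually_le_deriv {c : ℝ} (hc₀ : 0 < c)
    (hg : ∀ᶠ x in atTop, HasDerivAt g (g' x) x) (hc : ∀ᶠ x in atTop, c ≤ g' x) :
    Tendsto g atTop atTop := by
  obtain ⟨a, ha⟩ := exists_forall_ge_mul_sub_le_of_eventually_le_deriv hg hc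
  have hline : Tendsto (fun x ↦ c * (x - a) + g a) atTop atTop :=
    tendsto_atTop_add_const_right _ _
      ((tendsto_atTop_add_const_right _ (-a) tendsto_id).const_mul_atTop hc₀)
  refine tendsto_atTop_mono' _ ?_ hline
  filter_upwards [eventually_ge_atTop a] with x hx
  linarith [ha x hx]

theorem isLittleO_atTop_of_isLittleO_deriv {f f' : ℝ → E}
    (hf : ∀ᶠ x in atTop, HasDerivAt f (f' x) x) (hg : ∀ᶠ x in atTop, HasDerivAt g (g' x) x)
    (hg'_nonneg : ∀ᶠ x in atTop, 0 ≤ g' x) (hg_top : Tendsto g atTop atTop)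
    (h : f' =o[atTop] g') : f =o[atTop] g := by
  refine IsLittleO.of_bound fun c hc ↦ ?_
  obtain ⟨a, ha⟩ := eventually_atTop.1
    (hf.and (hg.and (hg'_nonneg.and (h.bound (half_pos hc)))))
  have hcompare : ∀ x ≥ a, ‖f x‖ ≤ ‖f a‖ + c / 2 * (g x - g a) := by
    intro x hx
    have hB : ∀ y ≥ a, HasDerivAt (fun y ↦ ‖f a‖ + c / 2 * (g y - g a)) (c / 2 * g' y) y :=
      fun y hy ↦ (((ha y hy).2.1.sub_const _).const_mul _).const_add _
    refine image_norm_le_of_norm_deriv_right_le_deriv_boundary'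
      (fun y hy ↦ (ha y hy.1).1.continuousAt.continuousWithinAt)
      (fun y hy ↦ (ha y hy.1).1.hasDerivWithinAt) (by simp)
      (fun y hy ↦ (hB y hy.1).continuousAt.continuousWithinAt)
      (fun y hy ↦ (hB y hy.1).hasDerivWithinAt) (fun y hy ↦ ?_) ⟨hx, le_rfl⟩
    obtain ⟨-, -, hnonneg, hbound⟩ := ha y hy.1
    rwa [Real.norm_of_nonneg hnonneg] at hbound
  have habsorb : ∀ᶠ x in atTop, ‖f a‖ - c / 2 * g a ≤ c / 2 * g x :=
    (hg_top.const_mul_atTop (half_pos hc)).eventually_ge_atTop _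
  filter_upwards [habsorb, eventually_ge_atTop a] with x hx hax
  calc ‖f x‖ ≤ ‖f a‖ + c / 2 * (g x - g a) := hcompare x hax
    _ ≤ c * g x := by linarith
    _ ≤ c * ‖g x‖ := by gcongr; exact Real.le_norm_self _

theorem isEquivalent_atTop_of_isEquivalent_deriv {f f' : ℝ → ℝ}
    (hf : ∀ᶠ x in atTop, HasDerivAt f (f' x) x) (hg : ∀ᶠ x in atTop, HasDerivAt g (g' x) x)
    (hg'_nonneg : ∀ᶠ x in atTop, 0 ≤ g' x) (hg_top : Tendsto g atTop atTop)
    (h : f' ~[atTop] g') : f ~[atTop] g :=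
  isLittleO_atTop_of_isLittleO_deriv (hf.mp (hg.mono fun _ hg hf ↦ hf.sub hg)) hg
    hg'_nonneg hg_top h

end DerivAtTop

section SlowlyVaryingRate

variable {R ρ ρ' G : ℝ → ℝ}

theorem tendsto_atTop_of_deriv_eq_exp (hR : ∀ᶠ t in atTop, HasDerivAt R (ρ t) t)
    (hρ_nonneg : ∀ᶠ t in atTop, 0 ≤ ρ t)
    (hG : ∀ᶠ t in atTop, HasDerivAt G (Real.exp (R t)) t) : Tendsto G atTop atTop := by
  obtain ⟨a, ha⟩ := exists_forall_ge_mul_sub_le_of_eventually_le_deriv hR hρ_nonneg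
  refine tendsto_atTop_of_eventually_le_deriv (Real.exp_pos (R a)) hG ?_
  filter_upwards [eventually_ge_atTop a] with t ht
  exact Real.exp_le_exp.2 (by linarith [ha t ht])

theorem isEquivalent_exp_div_of_deriv_eq_exp (hR : ∀ᶠ t in atTop, HasDerivAt R (ρ t) t)
    (hρ : ∀ᶠ t in atTop, HasDerivAt ρ (ρ' t) t) (hρ_pos : ∀ᶠ t in atTop, 0 < ρ t)
    (hslow : Tendsto (fun t ↦ ρ' t / ρ t ^ 2) atTop (𝓝 0))
    (hG : ∀ᶠ t in atTop, HasDerivAt G (Real.exp (R t)) t) :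
    G ~[atTop] fun t ↦ Real.exp (R t) / ρ t := by
  have hderiv : ∀ᶠ t in atTop, HasDerivAt (fun t ↦ Real.exp (R t) / ρ t)
      (Real.exp (R t) * (1 - ρ' t / ρ t ^ 2)) t := by
    filter_upwards [hR, hρ, hρ_pos] with t hRt hρt hpos
    refine (hRt.exp.div hρt hpos.ne').congr_deriv ?_
    field_simp
  have hequiv : (fun t ↦ Real.exp (R t) * (1 - ρ' t / ρ t ^ 2)) ~[atTop]
      fun t ↦ Real.exp (R t) := by
    refine isEquivalent_of_tendsto_one ?_
    simpa [Pi.div_def] using hslow.const_sub 1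
  exact (isEquivalent_atTop_of_isEquivalent_deriv hderiv hG
    (.of_forall fun t ↦ (Real.exp_pos (R t)).le)
    (tendsto_atTop_of_deriv_eq_exp hR (hρ_pos.mono fun _ ↦ le_of_lt) hG) hequiv).symm

/-- The mean squared displacement at time `t` of Brownian motion reset to its starting point, as
a functional of the mean number of resets `R`. -/
noncomputable def resettingMSD (R : ℝ → ℝ) (t : ℝ) : ℝ :=
  Real.exp (-R t) * ∫ ω in (0 : ℝ)..t, Real.exp (R ω)

theorem tendsto_rate_mul_resettingMSD (hR_cont : Continuous R)
    (hR : ∀ᶠ t in atTop, HasDerivAt R (ρ t) t)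
    (hρ : ∀ᶠ t in atTop, HasDerivAt ρ (ρ' t) t) (hρ_pos : ∀ᶠ t in atTop, 0 < ρ t)
    (hslow : Tendsto (fun t ↦ ρ' t / ρ t ^ 2) atTop (𝓝 0)) :
    Tendsto (fun t ↦ ρ t * resettingMSD R t) atTop (𝓝 1) := by
  have hG (t : ℝ) : HasDerivAt (fun t ↦ ∫ ω in (0 : ℝ)..t, Real.exp (R ω)) (Real.exp (R t)) t :=
    (hR_cont.rexp.integral_hasStrictDerivAt 0 t).hasDerivAt
  have hequiv := isEquivalent_exp_div_of_deriv_eq_exp hR hρ hρ_pos hslow (.of_forall hG)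
  have hne : ∀ᶠ t in atTop, Real.exp (R t) / ρ t ≠ 0 :=
    hρ_pos.mono fun t ht ↦ (div_pos (Real.exp_pos _) ht).ne'
  refine ((isEquivalent_iff_tendsto_one hne).1 hequiv).congr fun t ↦ ?_
  simp only [Pi.div_apply, resettingMSD, Real.exp_neg]
  field_simp

end SlowlyVaryingRate

section PowerLaw

variable {r p : ℝ}

/-- The mean number of resets up to time `t` under the intensity `r * (t + 1) ^ p`. The closed
form is meaningful only for `p ≠ -1`, as division by `p + 1 = 0` gives `0`. -/
noncomputable def powerLawMeanResets (r p t : ℝ) : ℝ :=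
  r / (p + 1) * ((t + 1) ^ (p + 1) - 1)

theorem continuous_powerLawMeanResets (hp : -1 ≤ p) : Continuous (powerLawMeanResets r p) := by
  have hpow : Continuous fun t : ℝ ↦ (t + 1) ^ (p + 1) :=
    (continuous_add_const 1).rpow_const fun _ ↦ Or.inr (by linarith)
  exact (hpow.sub continuous_const).const_mul _

theorem hasDerivAt_add_one_rpow (q : ℝ) {t : ℝ} (ht : t + 1 ≠ 0) :
    HasDerivAt (fun t : ℝ ↦ (t + 1) ^ q) (q * (t + 1) ^ (q - 1)) t := by
  simpa using ((hasDerivAt_id t).add_const 1).rpow_const (p := q) (Or.inl ht)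

theorem hasDerivAt_powerLawMeanResets (hp : p ≠ -1) {t : ℝ} (ht : t + 1 ≠ 0) :
    HasDerivAt (powerLawMeanResets r p) (r * (t + 1) ^ p) t := by
  have hp' : p + 1 ≠ 0 := fun h ↦ hp (eq_neg_of_add_eq_zero_left h)
  refine (((hasDerivAt_add_one_rpow (p + 1) ht).sub_const 1).const_mul (r / (p + 1))).congr_deriv ?_
  rw [add_sub_cancel_right]
  field_simp

theorem tendsto_deriv_div_sq_powerLawRate (hp : -1 < p) :
    Tendsto (fun t : ℝ ↦ r * (p * (t + 1) ^ (p - 1)) / (r * (t + 1) ^ p) ^ 2) atTop (𝓝 0) := by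
  have hdecay : Tendsto (fun t : ℝ ↦ p / r * (t + 1) ^ (-(p + 1))) atTop (𝓝 0) := by
    simpa using ((tendsto_rpow_neg_atTop (by linarith : 0 < p + 1)).comp
      (tendsto_atTop_add_const_right atTop 1 tendsto_id)).const_mul (p / r)
  refine hdecay.congr' ?_
  filter_upwards [eventually_gt_atTop (-1)] with t ht
  have hpos : 0 < t + 1 := by linarith
  have hsplit : (t + 1) ^ (p - 1) = (t + 1) ^ (-(p + 1)) * ((t + 1) ^ p) ^ 2 := by
    rw [← Real.rpow_mul_natCast hpos.le, ← Real.rpow_add hpos]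
    congr 1
    push_cast
    ring
  rw [hsplit]
  field_simp

theorem tendsto_rate_mul_resettingMSD_powerLawMeanResets (hr : 0 < r) (hp : -1 < p) :
    Tendsto (fun t ↦ r * (t + 1) ^ p * resettingMSD (powerLawMeanResets r p) t) atTop (𝓝 1) := by
  have hpos : ∀ᶠ t : ℝ in atTop, 0 < t + 1 :=
    (eventually_gt_atTop (-1)).mono fun t ht ↦ by linarith
  exact tendsto_rate_mul_resettingMSD (continuous_powerLawMeanResets hp.le)
    (hpos.mono fun t ht ↦ hasDerivAt_powerLawMeanResets hp.ne' ht.ne')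
    (hpos.mono fun t ht ↦ (hasDerivAt_add_one_rpow p ht.ne').const_mul r)
    (hpos.mono fun t ht ↦ mul_pos hr (Real.rpow_pos_of_pos ht p))
    (tendsto_deriv_div_sq_powerLawRate hp)

end PowerLaw

theorem msd_power_law_subdiffusive_general (r p : ℝ) (hr : 0 < r) (hp : -1 < p) (R MSD : ℝ → ℝ)
    (hR : ∀ t, R t = r / (p + 1) * ((t + 1) ^ (p + 1) - 1))
    (hMSD : ∀ t, MSD t = Real.exp (-R t) * ∫ ω in (0 : ℝ)..t, Real.exp (R ω)) :
    Tendsto (fun t ↦ r * (t + 1) ^ p * MSD t) atTop (𝓝 1) := by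
  obtain rfl : R = powerLawMeanResets r p := funext hR
  obtain rfl : MSD = resettingMSD (powerLawMeanResets r p) := funext hMSD
  exact tendsto_rate_mul_resettingMSD_powerLawMeanResets hr hp

/-- For power-law resetting intensity `r(t) = r·(t+1)^p` with `p ∈ (-1,0)` and
`R(t) = (r/(p+1))·((t+1)^{p+1} - 1)`, the MSD `e^{-R(t)}·∫₀ᵗ e^{R(ω)} dω`
satisfies `r·(t+1)^p·MSD(t) → 1` as `t → ∞`; i.e. `MSD(t) ~ (1/r)·(t+1)^{-p}`,
subdiffusive behaviour with anomalous exponent `-p ∈ (0,1)`. -/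
theorem msd_power_law_subdiffusive (r p : ℝ) (hr : 0 < r)
    (hp₁ : -1 < p) (hp₂ : p < 0)
    (R MSD : ℝ → ℝ)
    (hR : ∀ t, R t = r / (p + 1) * ((t + 1) ^ (p + 1) - 1))
    (hMSD : ∀ t, MSD t = Real.exp (-R t) * ∫ ω in (0 : ℝ)..t, Real.exp (R ω)) :
    Tendsto (fun t => r * (t + 1) ^ p * MSD t) atTop (nhds 1) :=
  msd_power_law_subdiffusive_general r p hr hp₁ R MSD hR hMSD
end
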